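/- arXiv:2601.21388 — 2 statements merged into one kernel-verified Lean document; each statement's English description precedes it below -/
import Mathlib

section
/- For every real number y, (1/280)·cos(4y) − (16/315)·cos(3y) + (2/5)·cos(2y) − (16/5)·cos(y) + 205/72 ≤ y². Equivalently, for every h > 0 and every real ξ, the eighth-order discrete Laplacian symbol satisfies ψ_h^{(8)}(ξ) ≤ ξ². -/
/-- Discrete symbol of the eighth-order (p = 8) central finite difference
approximation of `-d²/dx²`. -/
noncomputable def psi8 (h ξ : ℝ) : ℝ :=
  ((1/280) * Real.cos (4*ξ*h) - (16/315) * Real.cos (3*ξ*h) + (2/5) * Real.cos (2*ξ*h)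
    - (16/5) * Real.cos (ξ*h) + 205/72) / h^2

/-!
Write `u = 2 - 2 cos y = 4 sin² (y/2)`. The order-`2m` symbol at unit step is the `m`-th partial sum
`S` of `y² = 4 arcsin² (sin (y/2)) = ∑ 2 uᵏ / (k² C(2k, k))`, `|y| ≤ π`. The identities
`u'² = u (4 - u)` and `u'' = 2 - u` make its second derivative telescope to
`S'' = 2 - 2 uᵐ / C(2m, m) ≤ 2`, so `y² - S` is convex on all of `ℝ`. Its derivative vanishes at
`0`, hence `0` is a global minimum, with value `0`.
-/

open Finset Real

/-- Symbol, at unit step, of the central finite difference approximation of `-d²/dx²` of order `2m`,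
expanded in powers of the second-order symbol `2 - 2 cos y` instead of cosines of multiples of `y`.
The power `k` of the expansion is indexed as `k + 1`. -/
noncomputable def centralDifferenceSymbol (m : ℕ) (y : ℝ) : ℝ :=
  ∑ k ∈ range m, 2 / ((k + 1) ^ 2 * Nat.centralBinom (k + 1)) * (2 - 2 * cos y) ^ (k + 1)

lemma centralDifferenceSymbol_zero_right (m : ℕ) : centralDifferenceSymbol m 0 = 0 := by
  simp [centralDifferenceSymbol]

lemma hasDerivAt_two_sub_two_mul_cos (y : ℝ) :
    HasDerivAt (fun y ↦ 2 - 2 * cos y) (2 * sin y) y := by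
  simpa using ((hasDerivAt_cos y).const_mul 2).const_sub 2

lemma hasDerivAt_two_sub_two_mul_cos_pow_succ (k : ℕ) (y : ℝ) :
    HasDerivAt (fun y ↦ (2 - 2 * cos y) ^ (k + 1))
      (2 * (k + 1) * ((2 - 2 * cos y) ^ k * sin y)) y := by
  refine ((hasDerivAt_two_sub_two_mul_cos y).fun_pow (k + 1)).congr_deriv ?_
  push_cast [add_tsub_cancel_right]
  ring

lemma hasDerivAt_two_sub_two_mul_cos_pow_mul_sin (k : ℕ) (y : ℝ) :
    HasDerivAt (fun y ↦ (2 - 2 * cos y) ^ k * sin y)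
      ((2 * k + 1) * (2 - 2 * cos y) ^ k - (k + 1) / 2 * (2 - 2 * cos y) ^ (k + 1)) y := by
  refine (((hasDerivAt_two_sub_two_mul_cos y).fun_pow k).fun_mul (hasDerivAt_sin y)).congr_deriv ?_
  cases k with
  | zero => simp; ring
  | succ k =>
    push_cast [add_tsub_cancel_right]
    linear_combination 2 * (k + 1) * (2 - 2 * cos y) ^ k * sin_sq y

lemma hasDerivAt_centralDifferenceSymbol (m : ℕ) (y : ℝ) :
    HasDerivAt (centralDifferenceSymbol m)
      (∑ k ∈ range m,
        4 / ((k + 1) * Nat.centralBinom (k + 1)) * ((2 - 2 * cos y) ^ k * sin y)) y := by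
  refine (HasDerivAt.fun_sum fun k _ ↦
    (hasDerivAt_two_sub_two_mul_cos_pow_succ k y).const_mul _).congr_deriv ?_
  refine sum_congr rfl fun k _ ↦ ?_
  field_simp
  ring

lemma hasDerivAt_deriv_centralDifferenceSymbol (m : ℕ) (y : ℝ) :
    HasDerivAt (deriv (centralDifferenceSymbol m))
      (2 - 2 * (2 - 2 * cos y) ^ m / Nat.centralBinom m) y := by
  rw [funext fun y ↦ (hasDerivAt_centralDifferenceSymbol m y).deriv]
  have telescope : ∑ k ∈ range m, (2 * (2 - 2 * cos y) ^ k / Nat.centralBinom k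
        - 2 * (2 - 2 * cos y) ^ (k + 1) / Nat.centralBinom (k + 1))
      = 2 - 2 * (2 - 2 * cos y) ^ m / Nat.centralBinom m := by
    simp [sum_range_sub' fun k ↦ 2 * (2 - 2 * cos y) ^ k / (Nat.centralBinom k : ℝ)]
  rw [← telescope]
  refine (HasDerivAt.fun_sum fun k _ ↦
    (hasDerivAt_two_sub_two_mul_cos_pow_mul_sin k y).const_mul _).congr_deriv ?_
  refine sum_congr rfl fun k _ ↦ ?_
  have centralBinom_succ :
      ((k + 1) * Nat.centralBinom (k + 1) : ℝ) = 2 * (2 * k + 1) * Nat.centralBinom k :=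
    mod_cast Nat.succ_mul_centralBinom_succ k
  have centralBinom_ne : (Nat.centralBinom k : ℝ) ≠ 0 := mod_cast Nat.centralBinom_ne_zero k
  have centralBinom_succ_ne : (Nat.centralBinom (k + 1) : ℝ) ≠ 0 :=
    mod_cast Nat.centralBinom_ne_zero (k + 1)
  field_simp
  linear_combination -4 * (2 - 2 * cos y) ^ k * centralBinom_succ

lemma hasDerivAt_sq_sub_centralDifferenceSymbol (m : ℕ) (y : ℝ) :
    HasDerivAt (fun y ↦ y ^ 2 - centralDifferenceSymbol m y)
      (2 * y - deriv (centralDifferenceSymbol m) y) y := by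
  simpa using (hasDerivAt_pow 2 y).fun_sub
    (hasDerivAt_centralDifferenceSymbol m y).differentiableAt.hasDerivAt

lemma convexOn_sq_sub_centralDifferenceSymbol (m : ℕ) :
    ConvexOn ℝ Set.univ fun y ↦ y ^ 2 - centralDifferenceSymbol m y := by
  have second_deriv (y : ℝ) : HasDerivAt (fun y ↦ 2 * y - deriv (centralDifferenceSymbol m) y)
      (2 * (2 - 2 * cos y) ^ m / Nat.centralBinom m) y := by
    simpa using
      ((hasDerivAt_id' y).const_mul 2).fun_sub (hasDerivAt_deriv_centralDifferenceSymbol m y)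
  refine Monotone.convexOn_univ_of_deriv
    (fun y ↦ (hasDerivAt_sq_sub_centralDifferenceSymbol m y).differentiableAt) ?_
  rw [funext fun y ↦ (hasDerivAt_sq_sub_centralDifferenceSymbol m y).deriv]
  refine monotone_of_hasDerivAt_nonneg second_deriv fun y ↦ ?_
  have base_nonneg : 0 ≤ 2 - 2 * cos y := by linarith [cos_le_one y]
  simp only [Pi.zero_apply]
  positivity

theorem centralDifferenceSymbol_le_sq (m : ℕ) (y : ℝ) : centralDifferenceSymbol m y ≤ y ^ 2 := by
  have critical : HasDerivAt (fun y ↦ y ^ 2 - centralDifferenceSymbol m y) 0 0 := by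
    simpa [(hasDerivAt_centralDifferenceSymbol m 0).deriv] using
      hasDerivAt_sq_sub_centralDifferenceSymbol m 0
  have minimum : IsMinOn (fun y ↦ y ^ 2 - centralDifferenceSymbol m y) Set.univ 0 :=
    (convexOn_sq_sub_centralDifferenceSymbol m).isMinOn_of_rightDeriv_eq_zero (by simp)
      (critical.hasDerivWithinAt.derivWithin (uniqueDiffWithinAt_Ioi 0))
  simpa [centralDifferenceSymbol_zero_right] using minimum (Set.mem_univ y)

lemma centralDifferenceSymbol_four (y : ℝ) :
    centralDifferenceSymbol 4 y = (1/280) * cos (4*y) - (16/315) * cos (3*y) + (2/5) * cos (2*y)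
      - (16/5) * cos y + 205/72 := by
  have cos_four_mul : cos (4*y) = 2 * (2 * cos y ^ 2 - 1) ^ 2 - 1 := by
    rw [← cos_two_mul, ← cos_two_mul]
    ring_nf
  rw [cos_four_mul, cos_three_mul, cos_two_mul]
  norm_num [centralDifferenceSymbol, sum_range_succ, Nat.centralBinom, Nat.choose]
  ring

lemma psi8_eq_centralDifferenceSymbol_div_sq (h ξ : ℝ) :
    psi8 h ξ = centralDifferenceSymbol 4 (ξ * h) / h ^ 2 := by
  simp only [psi8, centralDifferenceSymbol_four, mul_assoc]

/-- For every real `y`,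
`(1/280)cos(4y) − (16/315)cos(3y) + (2/5)cos(2y) − (16/5)cos(y) + 205/72 ≤ y²`;
equivalently, for every `h > 0` and real `ξ`, the eighth-order discrete Laplacian
symbol satisfies `ψ_h^{(8)}(ξ) ≤ ξ²`. -/
theorem eighth_order_symbol_upper_bound :
    (∀ y : ℝ, (1/280) * Real.cos (4*y) - (16/315) * Real.cos (3*y) + (2/5) * Real.cos (2*y)
      - (16/5) * Real.cos y + 205/72 ≤ y^2) ∧
    (∀ h : ℝ, 0 < h → ∀ ξ : ℝ, psi8 h ξ ≤ ξ^2) := by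
  refine ⟨fun y ↦ ?_, fun h hh ξ ↦ ?_⟩
  · rw [← centralDifferenceSymbol_four]
    exact centralDifferenceSymbol_le_sq 4 y
  · rw [psi8_eq_centralDifferenceSymbol_div_sq, div_le_iff₀ (by positivity), ← mul_pow]
    exact centralDifferenceSymbol_le_sq 4 (ξ * h)
end

section
/- There exists a constant C > 0 such that for every h > 0 and every real ξ with 0 ≤ ξ ≤ π/h, one has |√(ψ_h^{(4)}(ξ)) − ξ| ≤ C·ξ⁵·h⁴. -/
/-!
In the variable `ξ`, the symbol satisfies `ψ'' = 2 - (4/3) (1 - cos (ξ h))²`, which falls short of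
`(ξ²)'' = 2` by a multiple of a square. Since `0 ≤ 1 - cos x ≤ x² / 2`, this defect lies between `0`
and `ξ⁴ h⁴ / 3`; integrating twice from `0`, where `ψ` and `ψ'` vanish, gives
`0 ≤ ξ² - ψ ≤ ξ⁶ h⁴ / 90`. Dividing by `ξ + √ψ ≥ ξ` turns this into a bound for `ξ - √ψ`.
-/

/-- Discrete symbol of the fourth-order (p = 4) central finite difference
approximation of `-d²/dx²`. -/
noncomputable def psi4 (h ξ : ℝ) : ℝ :=
  ((1/6) * Real.cos (2*ξ*h) - (8/3) * Real.cos (ξ*h) + 5/2) / h^2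

section Comparison

variable {f f' f'' g g' g'' : ℝ → ℝ} {a : ℝ}

lemma le_of_hasDerivAt_le (hf : ∀ x, a ≤ x → HasDerivAt f (f' x) x)
    (hg : ∀ x, a ≤ x → HasDerivAt g (g' x) x) (ha : f a ≤ g a)
    (hle : ∀ x, a ≤ x → f' x ≤ g' x) {x : ℝ} (hx : a ≤ x) : f x ≤ g x :=
  image_le_of_deriv_right_le_deriv_boundary
    (fun y hy => (hf y hy.1).continuousAt.continuousWithinAt)
    (fun y hy => (hf y hy.1).hasDerivWithinAt) ha
    (fun y hy => (hg y hy.1).continuousAt.continuousWithinAt)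
    (fun y hy => (hg y hy.1).hasDerivWithinAt)
    (fun y hy => hle y hy.1) ⟨hx, le_rfl⟩

lemma le_of_second_hasDerivAt_le (hf : ∀ x, a ≤ x → HasDerivAt f (f' x) x)
    (hf' : ∀ x, a ≤ x → HasDerivAt f' (f'' x) x) (hg : ∀ x, a ≤ x → HasDerivAt g (g' x) x)
    (hg' : ∀ x, a ≤ x → HasDerivAt g' (g'' x) x) (ha : f a ≤ g a) (ha' : f' a ≤ g' a)
    (hle : ∀ x, a ≤ x → f'' x ≤ g'' x) {x : ℝ} (hx : a ≤ x) : f x ≤ g x :=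
  le_of_hasDerivAt_le hf hg ha (fun _ hy => le_of_hasDerivAt_le hf' hg' ha' hle hy) hx

end Comparison

lemma abs_sqrt_sub_mul_le {a : ℝ} (ha : 0 ≤ a) (b : ℝ) : |√a - b| * b ≤ |a - b ^ 2| :=
  calc |√a - b| * b ≤ |√a - b| * |√a + b| := by
        gcongr
        exact (le_add_of_nonneg_left (Real.sqrt_nonneg a)).trans (le_abs_self _)
    _ = |√a ^ 2 - b ^ 2| := by rw [← abs_mul]; ring_nf
    _ = |a - b ^ 2| := by rw [Real.sq_sqrt ha]

section Symbol

variable {h : ℝ}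

lemma psi4_zero_right (h : ℝ) : psi4 h 0 = 0 := by
  norm_num [psi4]

lemma psi4_abs (h ξ : ℝ) : psi4 h |ξ| = psi4 h ξ := by
  rcases abs_choice ξ with hξ | hξ <;> simp [psi4, hξ]

lemma psi4_eq_one_sub_cos_mul (h ξ : ℝ) :
    psi4 h ξ = (1 - Real.cos (ξ * h)) * (7 - Real.cos (ξ * h)) / (3 * h ^ 2) := by
  rw [psi4, mul_assoc, Real.cos_two_mul]
  ring

lemma psi4_nonneg (h ξ : ℝ) : 0 ≤ psi4 h ξ := by
  have hcos := Real.cos_le_one (ξ * h)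
  rw [psi4_eq_one_sub_cos_mul]
  exact div_nonneg (mul_nonneg (by linarith) (by linarith)) (by positivity)

/-- The derivative of the symbol `psi4 h` with respect to the frequency, for nonzero `h`. -/
noncomputable def psi4Deriv (h ξ : ℝ) : ℝ :=
  ((8 / 3) * Real.sin (ξ * h) - (1 / 3) * Real.sin (2 * ξ * h)) / h

lemma psi4Deriv_zero_right (h : ℝ) : psi4Deriv h 0 = 0 := by
  simp [psi4Deriv]

lemma hasDerivAt_psi4 (hh : h ≠ 0) (ξ : ℝ) : HasDerivAt (psi4 h) (psi4Deriv h ξ) ξ := by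
  have hx : HasDerivAt (fun y => y * h) h ξ := hasDerivAt_mul_const h
  have h2x : HasDerivAt (fun y => 2 * y * h) (2 * h) ξ := by
    simpa using ((hasDerivAt_id ξ).const_mul 2).mul_const h
  refine ((((h2x.cos.const_mul (1 / 6)).sub (hx.cos.const_mul (8 / 3))).add_const
    (5 / 2)).div_const (h ^ 2)).congr_deriv ?_
  rw [psi4Deriv]
  field_simp
  ring

lemma hasDerivAt_psi4Deriv (hh : h ≠ 0) (ξ : ℝ) :
    HasDerivAt (psi4Deriv h) (2 - (4 / 3) * (1 - Real.cos (ξ * h)) ^ 2) ξ := by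
  have hx : HasDerivAt (fun y => y * h) h ξ := hasDerivAt_mul_const h
  have h2x : HasDerivAt (fun y => 2 * y * h) (2 * h) ξ := by
    simpa using ((hasDerivAt_id ξ).const_mul 2).mul_const h
  refine (((hx.sin.const_mul (8 / 3)).sub (h2x.sin.const_mul (1 / 3))).div_const h).congr_deriv ?_
  rw [mul_assoc 2 ξ h, Real.cos_two_mul]
  field_simp
  ring

lemma one_sub_cos_sq_le (x : ℝ) : (1 - Real.cos x) ^ 2 ≤ x ^ 4 / 4 :=
  calc (1 - Real.cos x) ^ 2 ≤ (x ^ 2 / 2) ^ 2 := by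
        gcongr
        · exact sub_nonneg.2 (Real.cos_le_one x)
        · linarith [Real.one_sub_sq_div_two_le_cos (x := x)]
    _ = x ^ 4 / 4 := by ring

lemma psi4_le_sq (hh : h ≠ 0) (ξ : ℝ) : psi4 h ξ ≤ ξ ^ 2 := by
  rw [← psi4_abs, ← sq_abs]
  refine le_of_second_hasDerivAt_le (g := fun y => y ^ 2) (g' := fun y => 2 * y)
    (g'' := fun _ => 2) (fun y _ => hasDerivAt_psi4 hh y) (fun y _ => hasDerivAt_psi4Deriv hh y)
    (fun y _ => by simpa using hasDerivAt_pow 2 y)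
    (fun y _ => by simpa using (hasDerivAt_id y).const_mul 2)
    (by simp [psi4_zero_right]) (by simp [psi4Deriv_zero_right]) (fun y _ => ?_) (abs_nonneg ξ)
  exact sub_le_self _ (by positivity)

lemma sq_sub_le_psi4 (hh : h ≠ 0) (ξ : ℝ) : ξ ^ 2 - ξ ^ 6 * h ^ 4 / 90 ≤ psi4 h ξ := by
  rw [← psi4_abs, ← sq_abs, ← Even.pow_abs (by decide : Even 6) ξ]
  refine le_of_second_hasDerivAt_le (f := fun y => y ^ 2 - y ^ 6 * h ^ 4 / 90)
    (f' := fun y => 2 * y - y ^ 5 * h ^ 4 / 15) (f'' := fun y => 2 - y ^ 4 * h ^ 4 / 3)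
    (fun y _ => ?_) (fun y _ => ?_) (fun y _ => hasDerivAt_psi4 hh y)
    (fun y _ => hasDerivAt_psi4Deriv hh y)
    (by simp [psi4_zero_right]) (by simp [psi4Deriv_zero_right]) (fun y _ => ?_) (abs_nonneg ξ)
  · refine ((hasDerivAt_pow 2 y).sub
      (((hasDerivAt_pow 6 y).mul_const (h ^ 4)).div_const 90)).congr_deriv ?_
    push_cast
    ring
  · refine (((hasDerivAt_id y).const_mul 2).sub
      (((hasDerivAt_pow 5 y).mul_const (h ^ 4)).div_const 15)).congr_deriv ?_
    push_cast
    ring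
  · have hdefect := one_sub_cos_sq_le (y * h)
    rw [mul_pow] at hdefect
    linarith

lemma abs_psi4_sub_sq_le (hh : h ≠ 0) (ξ : ℝ) : |psi4 h ξ - ξ ^ 2| ≤ ξ ^ 6 * h ^ 4 / 90 := by
  rw [abs_sub_comm, abs_of_nonneg (sub_nonneg.2 (psi4_le_sq hh ξ))]
  exact sub_le_comm.1 (sq_sub_le_psi4 hh ξ)

end Symbol

theorem fourth_order_discrete_frequency_consistency_general {h : ℝ} (hh : h ≠ 0) (ξ : ℝ) :
    |√(psi4 h ξ) - (|ξ|)| ≤ 1 / 90 * |ξ| ^ 5 * h ^ 4 := by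
  rcases eq_or_ne ξ 0 with rfl | hξ
  · simp [psi4_zero_right]
  refine le_of_mul_le_mul_right ?_ (abs_pos.2 hξ)
  calc |√(psi4 h ξ) - (|ξ|)| * |ξ| ≤ |psi4 h ξ - |ξ| ^ 2| :=
        abs_sqrt_sub_mul_le (psi4_nonneg h ξ) |ξ|
    _ ≤ |ξ| ^ 6 * h ^ 4 / 90 := by
        simpa only [psi4_abs] using abs_psi4_sub_sq_le hh |ξ|
    _ = 1 / 90 * |ξ| ^ 5 * h ^ 4 * |ξ| := by ring

/-- There exists `C > 0` such that for every `h > 0` and every `0 ≤ ξ ≤ π/h`,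
`|√(ψ_h^{(4)}(ξ)) − ξ| ≤ C·ξ⁵·h⁴`. -/
theorem fourth_order_discrete_frequency_consistency :
    ∃ C : ℝ, 0 < C ∧ ∀ h : ℝ, 0 < h → ∀ ξ : ℝ, 0 ≤ ξ → ξ ≤ Real.pi / h →
      |Real.sqrt (psi4 h ξ) - ξ| ≤ C * ξ^5 * h^4 := by
  refine ⟨1 / 90, by norm_num, fun h hh ξ hξ _ => ?_⟩
  simpa only [abs_of_nonneg hξ] using fourth_order_discrete_frequency_consistency_general hh.ne' ξ
end
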